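/- Let z₀, γ₀ ∈ 𝔻 and γ₁ ∈ 𝔻. Let f ∈ ℋ satisfy f(z₀) = γ₀ and H¹f(z₀) = γ₁. Then there exists f* ∈ 𝒮 such that f(z) = T_{γ₀}(T_{−z₀}(z)·T_{γ₁}(T_{−z₀}(z)·f*(z))) for all z ∈ 𝔻. -/

import Mathlib

open Complex Metric

/-- `ℋ`: analytic self-maps of the open unit disk. -/
def Hclass (f : ℂ → ℂ) : Prop :=
  DifferentiableOn ℂ f (ball (0 : ℂ) 1) ∧ Set.MapsTo f (ball (0 : ℂ) 1) (ball (0 : ℂ) 1)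

/-- `𝒮`: analytic maps of the open unit disk into the closed unit disk. -/
def Sclass (f : ℂ → ℂ) : Prop :=
  DifferentiableOn ℂ f (ball (0 : ℂ) 1) ∧ Set.MapsTo f (ball (0 : ℂ) 1) (closedBall (0 : ℂ) 1)

/-- The Möbius transformation `T_a(z) = (z + a)/(1 + conj(a) z)`. -/
noncomputable def T (a z : ℂ) : ℂ := (z + a) / (1 + (starRingEnd ℂ) a * z)

/-- The (first-order) hyperbolic derivative `H¹f(z) = (1-|z|²)f'(z)/(1-|f(z)|²)`. -/
noncomputable def H1 (f : ℂ → ℂ) (z : ℂ) : ℂ :=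
  ((1 - ‖z‖ ^ 2 : ℝ) : ℂ) * deriv f z / ((1 - ‖f z‖ ^ 2 : ℝ) : ℂ)

/-!
The hyperbolic difference quotient `g z = T (-f z₀) (f z) / T (-z₀) z` of `f ∈ ℋ` at `z₀` lies in
`𝒮` by the Schwarz lemma, takes the value `H1 f z₀` at `z₀`, and recovers `f` as
`T (f z₀) (T (-z₀) z * g z)`. If `g z₀` lies in the open disk, then `g ∈ ℋ` by the maximum modulus
principle, so the difference quotient can be formed a second time; that of `g` is `f*`.
-/

open scoped ComplexConjugate

section MobiusTransformation

variable {a z : ℂ}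

theorem one_add_conj_mul_ne_zero (ha : a ∈ ball (0 : ℂ) 1) (hz : z ∈ closedBall (0 : ℂ) 1) :
    1 + conj a * z ≠ 0 := by
  rw [mem_ball_zero_iff] at ha
  rw [mem_closedBall_zero_iff] at hz
  intro h
  have norm_mul_eq_one : ‖a‖ * ‖z‖ = 1 := by
    simpa using congrArg norm (eq_neg_of_add_eq_zero_right h)
  exact (mul_lt_one_of_nonneg_of_lt_one_left (norm_nonneg a) ha hz).ne norm_mul_eq_one

theorem one_sub_conj_mul_self_ne_zero (ha : ‖a‖ ≠ 1) : 1 - conj a * a ≠ 0 := by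
  rw [conj_mul', sub_ne_zero, ne_comm]
  exact_mod_cast (pow_eq_one_iff_of_nonneg (norm_nonneg a) two_ne_zero).not.2 ha

@[simp]
theorem T_zero (a : ℂ) : T a 0 = a := by simp [T]

@[simp]
theorem T_neg_self (a : ℂ) : T (-a) a = 0 := by simp [T]

theorem T_T_neg (ha : ‖a‖ ≠ 1) (hz : 1 - conj a * z ≠ 0) : T a (T (-a) z) = z := by
  have ha' := one_sub_conj_mul_self_ne_zero ha
  have den_eq : 1 + conj a * T (-a) z = (1 - conj a * a) / (1 - conj a * z) := by
    simp only [T, map_neg, neg_mul, ← sub_eq_add_neg]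
    field_simp
    ring
  have num_eq : T (-a) z + a = z * ((1 - conj a * a) / (1 - conj a * z)) := by
    simp only [T, map_neg, neg_mul, ← sub_eq_add_neg]
    rw [div_add' _ _ _ hz]
    ring
  rw [T, den_eq, num_eq, mul_div_cancel_right₀ _ (div_ne_zero ha' hz)]

theorem T_T_neg_of_mem_ball (ha : a ∈ ball (0 : ℂ) 1) (hz : z ∈ closedBall (0 : ℂ) 1) :
    T a (T (-a) z) = z := by
  refine T_T_neg (mem_ball_zero_iff.1 ha).ne ?_
  simpa [← sub_eq_add_neg] using one_add_conj_mul_ne_zero (a := -a) (by simpa using ha) hz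

theorem one_sub_norm_T_sq (h : 1 + conj a * z ≠ 0) :
    1 - ‖T a z‖ ^ 2 = (1 - ‖a‖ ^ 2) * (1 - ‖z‖ ^ 2) / ‖1 + conj a * z‖ ^ 2 := by
  have norm_den_sq_sub :
      ‖1 + conj a * z‖ ^ 2 - ‖z + a‖ ^ 2 = (1 - ‖a‖ ^ 2) * (1 - ‖z‖ ^ 2) := by
    simp only [← normSq_eq_norm_sq, normSq_apply, add_re, add_im, mul_re, mul_im, conj_re, conj_im,
      one_re, one_im]
    ring
  rw [← norm_den_sq_sub, T, norm_div, div_pow, sub_div,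
    div_self (pow_ne_zero 2 (norm_ne_zero_iff.2 h))]

theorem hasDerivAt_T (h : 1 + conj a * z ≠ 0) :
    HasDerivAt (T a) ((1 - conj a * a) / (1 + conj a * z) ^ 2) z := by
  have num : HasDerivAt (fun w => w + a) 1 z := (hasDerivAt_id z).add_const a
  have den : HasDerivAt (fun w => 1 + conj a * w) (conj a) z := by
    simpa using ((hasDerivAt_id z).const_mul (conj a)).const_add 1
  exact (num.div den h).congr_deriv (by ring)

theorem hasDerivAt_T_zero (a : ℂ) : HasDerivAt (T a) (1 - conj a * a) 0 := by
  simpa using hasDerivAt_T (a := a) (z := 0) (by simp)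

theorem hasDerivAt_T_neg_self (ha : ‖a‖ ≠ 1) : HasDerivAt (T (-a)) (1 - conj a * a)⁻¹ a := by
  have ha' := one_sub_conj_mul_self_ne_zero ha
  have den_eq : 1 + conj (-a) * a = 1 - conj a * a := by simp [sub_eq_add_neg]
  refine (hasDerivAt_T (den_eq ▸ ha')).congr_deriv ?_
  rw [den_eq, map_neg, neg_mul_neg, sq, div_mul_cancel_left₀ ha']

end MobiusTransformation

theorem mapsTo_ball_of_mapsTo_closedBall_of_mem_ball {E F : Type*} [NormedAddCommGroup E]
    [NormedSpace ℂ E] [NormedAddCommGroup F] [NormedSpace ℂ F] {f : E → F} {U : Set E} {c : E}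
    {r : ℝ} (hU : IsPreconnected U) (hUo : IsOpen U) (hf : DifferentiableOn ℂ f U)
    (hmaps : Set.MapsTo f U (closedBall 0 r)) (hc : c ∈ U) (hfc : f c ∈ ball 0 r) :
    Set.MapsTo f U (ball 0 r) := by
  intro x hx
  simp only [Set.MapsTo, mem_closedBall_zero_iff] at hmaps
  rw [mem_ball_zero_iff] at hfc ⊢
  refine (hmaps hx).lt_of_ne fun norm_eq => ?_
  have isMaxOn : IsMaxOn (norm ∘ f) U x := fun y hy => (hmaps hy).trans_eq norm_eq.symm
  have norm_const : ‖f c‖ = ‖f x‖ := norm_eqOn_of_isPreconnected_of_isMaxOn hU hUo hf hx isMaxOn hc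
  exact hfc.ne (norm_const.trans norm_eq)

theorem Sclass.hclass_of_mem_ball {g : ℂ → ℂ} {z₀ : ℂ} (hg : Sclass g)
    (hz₀ : z₀ ∈ ball (0 : ℂ) 1) (hgz₀ : g z₀ ∈ ball (0 : ℂ) 1) : Hclass g :=
  ⟨hg.1, mapsTo_ball_of_mapsTo_closedBall_of_mem_ball (convex_ball 0 1).isPreconnected isOpen_ball
    hg.1 hg.2 hz₀ hgz₀⟩

theorem Hclass.comp {f g : ℂ → ℂ} (hf : Hclass f) (hg : Hclass g) : Hclass (f ∘ g) :=
  ⟨hf.1.comp hg.1 hg.2, hf.2.comp hg.2⟩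

theorem Sclass.comp_hclass {f g : ℂ → ℂ} (hf : Sclass f) (hg : Hclass g) : Sclass (f ∘ g) :=
  ⟨hf.1.comp hg.1 hg.2, hf.2.comp hg.2⟩

theorem hclass_T {a : ℂ} (ha : a ∈ ball (0 : ℂ) 1) : Hclass (T a) := by
  have den_ne_zero : ∀ z ∈ ball (0 : ℂ) 1, 1 + conj a * z ≠ 0 := fun z hz =>
    one_add_conj_mul_ne_zero ha (ball_subset_closedBall hz)
  refine ⟨fun z hz => (hasDerivAt_T (den_ne_zero z hz)).differentiableAt.differentiableWithinAt,
    fun z hz => ?_⟩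
  have one_sub_sq_pos : 0 < 1 - ‖T a z‖ ^ 2 := by
    have den_pos := norm_pos_iff.2 (den_ne_zero z hz)
    rw [mem_ball_zero_iff, ← sq_lt_one_iff₀ (norm_nonneg _), ← sub_pos] at ha hz
    rw [one_sub_norm_T_sq (norm_pos_iff.1 den_pos)]
    positivity
  rwa [mem_ball_zero_iff, ← sq_lt_one_iff₀ (norm_nonneg _), ← sub_pos]

theorem Hclass.sclass_dslope_zero {f : ℂ → ℂ} (hf : Hclass f) (hf0 : f 0 = 0) :
    Sclass (dslope f 0) := by
  refine ⟨(differentiableOn_dslope (ball_mem_nhds 0 one_pos)).2 hf.1, fun z hz => ?_⟩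
  have maps : Set.MapsTo f (ball 0 1) (closedBall (f 0) 1) := by
    simpa only [hf0] using hf.2.mono_right ball_subset_closedBall
  simpa using norm_dslope_le_div_of_mapsTo_ball hf.1 maps hz

/-- The hyperbolic difference quotient of `f` at `z₀`, i.e. `z ↦ T (-f z₀) (f z) / T (-z₀) z` with
its singularity at `z₀` removed. It is encoded as the slope at `0` of `f` conjugated by the Möbius
transformations that move `z₀` and `f z₀` to `0`, so that it is also meaningful at `z = z₀`. -/
noncomputable def hyperbolicSlope (f : ℂ → ℂ) (z₀ : ℂ) : ℂ → ℂ :=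
  dslope (T (-f z₀) ∘ f ∘ T z₀) 0 ∘ T (-z₀)

section HyperbolicSlope

variable {f : ℂ → ℂ} {z₀ z : ℂ}

theorem hyperbolicSlope_self (hf : DifferentiableAt ℂ f z₀) (hfz₀ : ‖f z₀‖ ≠ 1) :
    hyperbolicSlope f z₀ z₀ = H1 f z₀ := by
  have deriv_inner : HasDerivAt (f ∘ T z₀) (deriv f z₀ * (1 - conj z₀ * z₀)) 0 :=
    hf.hasDerivAt.comp_of_eq 0 (hasDerivAt_T_zero z₀) (T_zero z₀).symm
  have deriv_conjugate : HasDerivAt (T (-f z₀) ∘ f ∘ T z₀)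
      ((1 - conj (f z₀) * f z₀)⁻¹ * (deriv f z₀ * (1 - conj z₀ * z₀))) 0 :=
    (hasDerivAt_T_neg_self hfz₀).comp_of_eq 0 deriv_inner (by simp)
  rw [hyperbolicSlope, Function.comp_apply, T_neg_self, dslope_same, deriv_conjugate.deriv, H1,
    conj_mul', conj_mul']
  push_cast
  ring

theorem Hclass.sclass_hyperbolicSlope (hf : Hclass f) (hz₀ : z₀ ∈ ball (0 : ℂ) 1) :
    Sclass (hyperbolicSlope f z₀) := by
  have neg_mem_ball : ∀ {a : ℂ}, a ∈ ball (0 : ℂ) 1 → -a ∈ ball (0 : ℂ) 1 := by simp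
  have conjugate : Hclass (T (-f z₀) ∘ f ∘ T z₀) :=
    (hclass_T (neg_mem_ball (hf.2 hz₀))).comp (hf.comp (hclass_T hz₀))
  exact (conjugate.sclass_dslope_zero (by simp)).comp_hclass (hclass_T (neg_mem_ball hz₀))

theorem T_neg_mul_hyperbolicSlope (f : ℂ → ℂ) (hz₀ : z₀ ∈ ball (0 : ℂ) 1)
    (hz : z ∈ closedBall (0 : ℂ) 1) :
    T (-z₀) z * hyperbolicSlope f z₀ z = T (-f z₀) (f z) := by
  simpa [hyperbolicSlope, T_T_neg_of_mem_ball hz₀ hz] using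
    sub_smul_dslope (T (-f z₀) ∘ f ∘ T z₀) 0 (T (-z₀) z)

theorem Hclass.eq_T_mul_hyperbolicSlope (hf : Hclass f) (hz₀ : z₀ ∈ ball (0 : ℂ) 1)
    (hz : z ∈ ball (0 : ℂ) 1) :
    f z = T (f z₀) (T (-z₀) z * hyperbolicSlope f z₀ z) := by
  rw [T_neg_mul_hyperbolicSlope f hz₀ (ball_subset_closedBall hz),
    T_T_neg_of_mem_ball (hf.2 hz₀) (ball_subset_closedBall (hf.2 hz))]

end HyperbolicSlope

/-- Any `f ∈ ℋ` with `f(z₀) = γ₀` and `H¹f(z₀) = γ₁ ∈ 𝔻` has the form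
`f(z) = T_{γ₀}(T_{-z₀}(z)·T_{γ₁}(T_{-z₀}(z)·f*(z)))` for some `f* ∈ 𝒮`. -/
theorem schwarz_pick_second_form (z₀ γ₀ γ₁ : ℂ)
    (hz₀ : z₀ ∈ ball (0 : ℂ) 1) (hγ₀ : γ₀ ∈ ball (0 : ℂ) 1)
    (hγ₁ : γ₁ ∈ ball (0 : ℂ) 1)
    (f : ℂ → ℂ) (hf : Hclass f) (hfz₀ : f z₀ = γ₀) (hH1 : H1 f z₀ = γ₁) :
    ∃ fstar : ℂ → ℂ, Sclass fstar ∧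
      ∀ z ∈ ball (0 : ℂ) 1, f z = T γ₀ (T (-z₀) z * T γ₁ (T (-z₀) z * fstar z)) := by
  subst hfz₀
  set g := hyperbolicSlope f z₀
  have g_z₀ : g z₀ = γ₁ :=
    (hyperbolicSlope_self (hf.1.differentiableAt (isOpen_ball.mem_nhds hz₀))
      (mem_ball_zero_iff.1 hγ₀).ne).trans hH1
  have g_z₀_mem_ball : g z₀ ∈ ball (0 : ℂ) 1 := by rwa [g_z₀]
  have hclass_g : Hclass g := (hf.sclass_hyperbolicSlope hz₀).hclass_of_mem_ball hz₀ g_z₀_mem_ball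
  refine ⟨hyperbolicSlope g z₀, hclass_g.sclass_hyperbolicSlope hz₀, fun z hz => ?_⟩
  rw [← g_z₀, ← hclass_g.eq_T_mul_hyperbolicSlope hz₀ hz]
  exact hf.eq_T_mul_hyperbolicSlope hz₀ hz
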